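/- arXiv:2311.04510 — 5 statements merged into one kernel-verified Lean document; each statement's English description precedes it below -/
import Mathlib

section
/- Let M be a nonzero Hilbert space contractively contained in the vector-valued Hardy space H²(𝔻, ℂⁿ), and suppose M is nearly invariant under the backward shift S*. Then the orthogonal complement M ⊖ (M ∩ zH²(𝔻, ℂⁿ)) of M ∩ zH²(𝔻, ℂⁿ) inside the Hilbert space M is nonzero and has dimension at most n. -/
noncomputable section
open scoped ENNReal

/-- The vector-valued Hardy space `H²(𝔻, ℂⁿ)`, identified isometrically with the space of
square-summable sequences of Taylor coefficients in `ℂⁿ`. -/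
abbrev H2V (n : ℕ) := lp (fun _ : ℕ => EuclideanSpace ℂ (Fin n)) 2

/-- The subspace `zH²(𝔻, ℂⁿ)` of `H²(𝔻, ℂⁿ)`: those functions vanishing at `0`, i.e. with
zeroth Taylor coefficient `0`. -/
def zH2V (n : ℕ) : Submodule ℂ (H2V n) where
  carrier := {f | f 0 = 0}
  add_mem' := by
    intro a b ha hb
    simp only [Set.mem_setOf_eq] at *
    simp [lp.coeFn_add, ha, hb]
  zero_mem' := by simp [lp.coeFn_zero]
  smul_mem' := by
    intro c a ha
    simp only [Set.mem_setOf_eq] at *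
    simp [lp.coeFn_smul, ha]

/-! If every `f ∈ M` vanished at `0`, near invariance would let the backward shift be iterated on
`M`, so all Taylor coefficients of all `f ∈ M` would vanish and `M` would be zero. Hence evaluation
at `0` is a nonzero operator on `M`. As it is continuous, its kernel `M ∩ zH²` is a proper closed
subspace, which gives a nonzero complement in the Hilbert space `M`; and on that complement
evaluation at `0` is injective, which bounds its dimension by that of the coefficient space. -/

/-- Near invariance under the backward shift `S*`, for a set of functions `f(z) = ∑ aₘ zᵐ` encoded
by their sequences of Taylor coefficients: if `f` lies in the set and `f(0) = 0`, then so does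
`S* f`, whose coefficients are `a₁, a₂, …`. -/
def IsNearlyBackwardShiftInvariant {K : Type*} [Zero K] (S : Set (ℕ → K)) : Prop :=
  ∀ a ∈ S, a 0 = 0 → (fun k => a (k + 1)) ∈ S

theorem IsNearlyBackwardShiftInvariant.eq_zero_of_forall_apply_zero {K : Type*} [Zero K]
    {S : Set (ℕ → K)} (hS : IsNearlyBackwardShiftInvariant S) (h0 : ∀ a ∈ S, a 0 = 0)
    {a : ℕ → K} (ha : a ∈ S) : a = 0 := by
  funext k
  induction k generalizing a with
  | zero => exact h0 a ha
  | succ _ ih => exact ih (hS a ha (h0 a ha))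

universe u v

section OrthogonalKer

variable {𝕜 : Type*} [RCLike 𝕜]

theorem orthogonal_ker_ne_bot {E F : Type*} [NormedAddCommGroup E] [InnerProductSpace 𝕜 E]
    [CompleteSpace E] [AddCommGroup F] [Module 𝕜 F] [TopologicalSpace F] [T1Space F]
    {f : E →ₗ[𝕜] F} (hf : f ≠ 0) (hcont : Continuous f) : f.kerᗮ ≠ ⊥ := by
  have hclosed : IsClosed (f.ker : Set E) := isClosed_singleton.preimage hcont
  have : CompleteSpace f.ker := hclosed.completeSpace_coe
  rwa [Ne, Submodule.orthogonal_eq_bot_iff, LinearMap.ker_eq_top]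

theorem lift_rank_orthogonal_ker_le {E : Type u} {F : Type v} [NormedAddCommGroup E]
    [InnerProductSpace 𝕜 E] [AddCommGroup F] [Module 𝕜 F] (f : E →ₗ[𝕜] F) :
    Cardinal.lift.{v} (Module.rank 𝕜 f.kerᗮ) ≤ Cardinal.lift.{u} (Module.rank 𝕜 F) :=
  LinearMap.lift_rank_le_of_injective (f.domRestrict f.kerᗮ)
    (LinearMap.injective_domRestrict_iff.2 f.ker.orthogonal_disjoint.symm)

end OrthogonalKer

theorem stmt2_general {𝕜 : Type*} [RCLike 𝕜] {M : Type u} {K : Type v} [NormedAddCommGroup M]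
    [InnerProductSpace 𝕜 M] [CompleteSpace M] [AddCommGroup K] [Module 𝕜 K] [TopologicalSpace K]
    [T1Space K] {ι : M →ₗ[𝕜] ℕ → K} (hι : ι ≠ 0) (hcont : Continuous fun f => ι f 0)
    (hnearly : IsNearlyBackwardShiftInvariant (Set.range ι)) :
    (LinearMap.proj 0 ∘ₗ ι).kerᗮ ≠ ⊥ ∧
      Cardinal.lift.{v} (Module.rank 𝕜 (LinearMap.proj 0 ∘ₗ ι).kerᗮ) ≤
        Cardinal.lift.{u} (Module.rank 𝕜 K) := by
  have heval : LinearMap.proj 0 ∘ₗ ι ≠ 0 := fun h =>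
    hι <| LinearMap.ext fun f => hnearly.eq_zero_of_forall_apply_zero
      (Set.forall_mem_range.2 (LinearMap.congr_fun h)) (Set.mem_range_self f)
  exact ⟨orthogonal_ker_ne_bot heval hcont, lift_rank_orthogonal_ker_le _⟩

/- STATEMENT 2: Let M be a nonzero Hilbert space contractively contained in H²(𝔻, ℂⁿ)
(via the injective linear inclusion ι), nearly invariant under the backward shift S*
(i.e. if f ∈ M and f(0) = 0 then the backward shift of f again lies in M).  Then
M ⊖ (M ∩ zH²(𝔻, ℂⁿ)), the orthogonal complement inside M of the preimage of zH²(𝔻, ℂⁿ),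
is nonzero and has dimension at most n. -/
theorem stmt2 (n : ℕ)
    (M : Type*) [NormedAddCommGroup M] [InnerProductSpace ℂ M] [CompleteSpace M]
    [Nontrivial M]
    (ι : M →ₗ[ℂ] H2V n) (hinj : Function.Injective ι)
    (hcontr : ∀ m : M, ‖ι m‖ ≤ ‖m‖)
    (hnearly : ∀ f : M, ι f 0 = 0 → ∃ g : M, ∀ k : ℕ, ι g k = ι f (k + 1)) :
    ((zH2V n).comap ι)ᗮ ≠ ⊥ ∧ Module.rank ℂ ((zH2V n).comap ι)ᗮ ≤ n := by
  let coeffs : H2V n →ₗ[ℂ] ℕ → EuclideanSpace ℂ (Fin n) := LinearMap.pi (lp.evalₗ _ 2)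
  have hne : coeffs ∘ₗ ι ≠ 0 :=
    LinearMap.ne_zero_of_injective (Subtype.coe_injective.comp hinj)
  have hcont : Continuous fun f => ι f 0 :=
    (lp.evalCLM ℂ _ 2 0 ∘L ι.mkContinuous 1 (by simpa using hcontr)).continuous
  have hrange : IsNearlyBackwardShiftInvariant (Set.range (coeffs ∘ₗ ι)) :=
    Set.forall_mem_range.2 fun f hf => (hnearly f hf).imp fun _ => funext
  have hker : (zH2V n).comap ι = (LinearMap.proj 0 ∘ₗ coeffs ∘ₗ ι).ker := rfl
  have hrank : Module.rank ℂ (EuclideanSpace ℂ (Fin n)) = n := by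
    rw [← Module.finrank_eq_rank, finrank_euclideanSpace_fin]
  rw [hker]
  simpa [hrank] using stmt2_general hne hcont hrange
end
end

section
/- Let M be a nonzero Hilbert space contractively contained in H²(𝔻, ℂⁿ). Suppose M is nearly invariant under the backward shift S* and that ‖zh‖_M ≥ ‖h‖_M whenever zh ∈ M. Let {g₁, …, g_r} (with 1 ≤ r ≤ n) be an orthonormal basis of M ⊖ (M ∩ zH²(𝔻, ℂⁿ)), and let G be the n×r matrix-valued function on 𝔻 whose columns are g₁, …, g_r, so that for f = (f₁, …, f_r), (Gf)(z) = Σ_{i=1}^r f_i(z) g_i(z). Then N := {f ∈ H²(𝔻, ℂ^r) : Gf ∈ M} is a vector subspace of H²(𝔻, ℂ^r) invariant under the backward shift S*, the linear map 𝒢 : N → M given by f ↦ Gf is a bijection, and for each h ∈ M, if h = Gf with f ∈ N then ‖h‖_M ≥ ‖f‖₂. -/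
noncomputable section
open scoped ENNReal

/-- The backward shift `S*` on `H²(𝔻, ℂⁿ)`: `(S*f)(z) = (f(z) - f(0))/z`. -/
def bshV {n : ℕ} (f : H2V n) : H2V n :=
  ⟨fun k => f (k + 1), by
    apply memℓp_gen
    have hf : Summable fun i => ‖f i‖ ^ (2 : ℝ≥0∞).toReal :=
      (memℓp_gen_iff (by norm_num)).1 (lp.memℓp f)
    exact hf.comp_injective (add_left_injective 1)⟩

/-- The forward shift `S` on `H²(𝔻, ℂⁿ)`: `(Sf)(z) = z f(z)`. -/
def fshV {n : ℕ} (f : H2V n) : H2V n :=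
  ⟨fun k => match k with | 0 => 0 | (j + 1) => f j, by
    apply memℓp_gen
    have hf : Summable fun i => ‖f i‖ ^ (2 : ℝ≥0∞).toReal :=
      (memℓp_gen_iff (by norm_num)).1 (lp.memℓp f)
    apply (summable_nat_add_iff 1).mp
    convert hf using 1⟩

/-- The `i`-th coordinate of the value at `z ∈ 𝔻` of `f ∈ H²(𝔻, ℂⁿ)`. -/
def evC {n : ℕ} (f : H2V n) (z : ℂ) (i : Fin n) : ℂ := ∑' m, f m i * z ^ m

/-- `GRel ι g f m` says that `m` (an element of the contained space `M`) is, as a function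
on the disc, equal to `Gf : z ↦ Σᵢ fᵢ(z) gᵢ(z)`, where `G` is the matrix-valued function
with columns `g₁, …, g_r`. -/
def GRel {n r : ℕ} {M : Type*} [NormedAddCommGroup M] [InnerProductSpace ℂ M]
    (ι : M →ₗ[ℂ] H2V n) (g : Fin r → M) (f : H2V r) (m : M) : Prop :=
  ∀ z ∈ Metric.ball (0 : ℂ) 1, ∀ j : Fin n,
    evC (ι m) z j = ∑ i : Fin r, evC f z i * evC (ι (g i)) z j

/-!
In terms of Taylor coefficients, `f ↦ Gf` is the map `f ↦ ∑ᵢ fᵢ gᵢ`, linear over the ring of formal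
power series. The vectors `gᵢ(0)` are linearly independent, because the `gᵢ` span a complement of
the kernel of `h ↦ h(0)`; comparing lowest-order terms, the `gᵢ` are linearly independent over the
power series ring, and so `f ↦ Gf` is injective. For surjectivity, split `h ∈ M` orthogonally as
`∑ᵢ aᵢ gᵢ + z h₁`, where `h₁ ∈ M` by near invariance and `‖a‖² + ‖h₁‖² ≤ ‖h‖²` by the hypothesis
on the norm, and iterate on `h₁`: the successive vectors `a` are the Taylor coefficients of the
required `f`, their squared norms add up to at most `‖h‖²`, and `h - Gf` is divisible by every
power of `z`.
-/

open PowerSeries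

section FormalSeries

variable {R J κ V : Type*}

section Semiring

variable [Semiring R]

/-- Sequences of vectors, seen as vectors of formal power series: the passage from the Taylor
coefficients of a vector-valued function to the Taylor series of its coordinates. -/
def vecSeries : (ℕ → J → R) ≃ₗ[R] (J → R⟦X⟧) where
  toFun a j := mk fun k => a k j
  invFun v k j := coeff k (v j)
  map_add' a b := by ext; simp
  map_smul' c a := by ext; simp
  left_inv a := by ext; simp
  right_inv v := by ext; simp

@[simp]
theorem coeff_vecSeries (a : ℕ → J → R) (k : ℕ) (j : J) : coeff k (vecSeries a j) = a k j :=
  coeff_mk k fun k => a k j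

/-- The vector of constant coefficients of a vector of formal power series, that is, its value
at `0`. -/
def evalZero : (J → R⟦X⟧) →ₗ[R] J → R := (coeff 0).compLeft J

@[simp]
theorem evalZero_vecSeries (a : ℕ → J → R) : evalZero (vecSeries a) = a 0 :=
  funext fun j => coeff_vecSeries a 0 j

@[simp]
theorem evalZero_X_smul (v : J → R⟦X⟧) : evalZero ((X : R⟦X⟧) • v) = 0 :=
  funext fun j => coeff_zero_X_mul (v j)

theorem X_smul_injective : Function.Injective fun v : J → R⟦X⟧ => (X : R⟦X⟧) • v :=
  fun _ _ h => funext fun j => X_mul_cancel (congrFun h j)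

theorem vecSeries_eq_C_add_X_smul (a : ℕ → J → R) :
    vecSeries a = (fun j => C (a 0 j)) + (X : R⟦X⟧) • vecSeries fun k => a (k + 1) := by
  ext j k
  cases k <;> simp [coeff_succ_X_mul, coeff_succ_C]

theorem eq_zero_of_forall_mem_eq_X_smul {S : Set (J → R⟦X⟧)}
    (hS : ∀ v ∈ S, ∃ w ∈ S, v = (X : R⟦X⟧) • w) {v : J → R⟦X⟧} (hv : v ∈ S) : v = 0 := by
  ext j k
  induction k generalizing v with
  | zero =>
    obtain ⟨w, -, rfl⟩ := hS v hv
    simp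
  | succ k ih =>
    obtain ⟨w, hw, rfl⟩ := hS v hv
    simpa [coeff_succ_X_mul] using ih hw

end Semiring

theorem linearCombination_C_add_X_smul [CommSemiring R] [Fintype κ] [AddCommMonoid V]
    [Module R V] [Module R⟦X⟧ V] [IsScalarTower R R⟦X⟧ V] (v : κ → V) (a : κ → R)
    (f : κ → R⟦X⟧) :
    Fintype.linearCombination R⟦X⟧ v ((fun i => C (a i)) + (X : R⟦X⟧) • f) =
      ∑ i, a i • v i + (X : R⟦X⟧) • Fintype.linearCombination R⟦X⟧ v f := by
  rw [map_add, map_smul, Fintype.linearCombination_apply]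
  simp only [← algebraMap_eq, algebraMap_smul]

theorem linearIndependent_of_evalZero [CommRing R] {v : κ → J → R⟦X⟧}
    (hv : LinearIndependent R fun i => evalZero (v i)) : LinearIndependent R⟦X⟧ v := by
  refine linearIndependent_iff_finset_linearIndependent.2 fun s => ?_
  replace hv := hv.comp ((↑) : s → κ) Subtype.val_injective
  rw [linearIndependent_iff_injective_fintypeLinearCombination, injective_iff_map_eq_zero]
  set L := Fintype.linearCombination R⟦X⟧ (v ∘ ((↑) : s → κ))
  refine fun f hf => eq_zero_of_forall_mem_eq_X_smul (S := L.ker) (fun f hf => ?_) hf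
  obtain ⟨a, rfl⟩ := vecSeries.surjective f
  have hsplit : ∑ i, a 0 i • v i + (X : R⟦X⟧) • L (vecSeries fun k => a (k + 1)) = 0 := by
    rw [vecSeries_eq_C_add_X_smul] at hf
    exact (linearCombination_C_add_X_smul _ _ _).symm.trans hf
  have ha : a 0 = 0 := by
    refine funext (Fintype.linearIndependent_iff.1 hv (a 0) ?_)
    simpa using congrArg evalZero hsplit
  refine ⟨vecSeries fun k => a (k + 1), X_smul_injective ?_, ?_⟩
  · simpa [ha] using hsplit
  · rw [vecSeries_eq_C_add_X_smul, ha]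
    simp [← Pi.zero_def]

end FormalSeries

section Convergence

variable {𝕜 : Type*}

theorem hasSum_coeff_mul [NormedCommRing 𝕜] [CompleteSpace 𝕜] {p q : 𝕜⟦X⟧} {z : 𝕜}
    (hp : Summable fun k => ‖coeff k p * z ^ k‖) (hq : Summable fun k => ‖coeff k q * z ^ k‖) :
    HasSum (fun k => coeff k (p * q) * z ^ k)
      ((∑' k, coeff k p * z ^ k) * ∑' k, coeff k q * z ^ k) := by
  have hterm (k : ℕ) : coeff k (p * q) * z ^ k = ∑ l ∈ Finset.HasAntidiagonal.antidiagonal k,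
      coeff l.1 p * z ^ l.1 * (coeff l.2 q * z ^ l.2) := by
    rw [coeff_mul, Finset.sum_mul]
    refine Finset.sum_congr rfl fun l hl => ?_
    rw [← Finset.HasAntidiagonal.mem_antidiagonal.1 hl, pow_add]
    ring
  simp only [hterm, tsum_mul_tsum_eq_tsum_sum_antidiagonal_of_summable_norm hp hq]
  exact (summable_norm_sum_mul_antidiagonal_of_summable_norm hp hq).of_norm.hasSum

theorem eq_of_eventually_hasSum_coeff [NontriviallyNormedField 𝕜] {p q : 𝕜⟦X⟧} {F : 𝕜 → 𝕜}
    (hp : ∀ᶠ z in nhds 0, HasSum (fun k => coeff k p * z ^ k) (F z))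
    (hq : ∀ᶠ z in nhds 0, HasSum (fun k => coeff k q * z ^ k) (F z)) : p = q := by
  have hasFPowerSeriesAt {p : 𝕜⟦X⟧}
      (hp : ∀ᶠ z in nhds 0, HasSum (fun k => coeff k p * z ^ k) (F z)) :
      HasFPowerSeriesAt F (.ofScalars 𝕜 fun k => coeff k p) 0 := by
    rw [hasFPowerSeriesAt_iff]
    simpa [FormalMultilinearSeries.coeff_ofScalars, mul_comm] using hp
  ext k
  have heq := (hasFPowerSeriesAt hp).eq_formalMultilinearSeries (hasFPowerSeriesAt hq)
  simpa [FormalMultilinearSeries.coeff_ofScalars] using congrArg (·.coeff k) heq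

end Convergence

theorem exists_lp_norm_le_of_sum_range_le {E : ℕ → Type*} [∀ k, NormedAddCommGroup (E k)]
    {p : ℝ≥0∞} (hp : 0 < p.toReal) {a : ∀ k, E k} {c : ℝ} (hc : 0 ≤ c)
    (h : ∀ N, ∑ k ∈ Finset.range N, ‖a k‖ ^ p.toReal ≤ c ^ p.toReal) :
    ∃ f : lp E p, ⇑f = a ∧ ‖f‖ ≤ c := by
  have hfin (s : Finset ℕ) : ∑ k ∈ s, ‖a k‖ ^ p.toReal ≤ c ^ p.toReal := by
    obtain ⟨N, hN⟩ := s.exists_nat_subset_range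
    exact (Finset.sum_le_sum_of_subset_of_nonneg hN fun _ _ _ => by positivity).trans (h N)
  exact ⟨⟨a, memℓp_gen' hfin⟩, rfl, lp.norm_le_of_forall_sum_le hp hc hfin⟩

theorem exists_orthonormalBasis_coe_eq {𝕜 E κ : Type*} [RCLike 𝕜] [NormedAddCommGroup E]
    [InnerProductSpace 𝕜 E] [Fintype κ] {g : κ → E} (hg : Orthonormal 𝕜 g) {U : Submodule 𝕜 E}
    (hU : Submodule.span 𝕜 (Set.range g) = U) :
    ∃ b : OrthonormalBasis κ 𝕜 U, ∀ i, (b i : E) = g i := by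
  have hmem (i : κ) : g i ∈ U := hU ▸ Submodule.subset_span ⟨i, rfl⟩
  have horth : Orthonormal 𝕜 fun i => (⟨g i, hmem i⟩ : U) :=
    (U.subtypeₗᵢ.orthonormal_comp_iff).1 hg
  refine ⟨.mk horth ((U.span_range_subtype_eq_top_iff hmem).2 hU).ge, fun i => ?_⟩
  rw [OrthonormalBasis.coe_mk]

section NearlyInvariant

section Algebra

variable {R M J κ : Type*} [CommRing R] [AddCommGroup M] [Module R M] {T : M →ₗ[R] J → R⟦X⟧}

/-- The elements of a space `M` of vector-valued functions that vanish at `0`, where `M` is given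
through the map `T` sending a function to its Taylor series. -/
def vanishing (T : M →ₗ[R] J → R⟦X⟧) : Submodule R M := (evalZero ∘ₗ T).ker

/-- Near invariance under the backward shift of a space `M` of vector-valued functions, given
through the map `T` sending a function to its Taylor series: dividing by `z` an element of `M`
that vanishes at `0` gives an element of `M`. -/
def IsNearlyInvariant (T : M →ₗ[R] J → R⟦X⟧) : Prop :=
  ∀ m ∈ vanishing T, ∃ h, T m = (X : R⟦X⟧) • T h

theorem IsNearlyInvariant.exists_eq_linearCombination [Fintype κ] (hT : IsNearlyInvariant T)
    {g : κ → M} {m : M} {a : κ → R} {f : κ → R⟦X⟧}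
    (hm : T m = Fintype.linearCombination R⟦X⟧ (fun i => T (g i))
      ((fun i => C (a i)) + (X : R⟦X⟧) • f)) :
    ∃ h, T h = Fintype.linearCombination R⟦X⟧ (fun i => T (g i)) f := by
  have hsub : T (m - ∑ i, a i • g i) =
      (X : R⟦X⟧) • Fintype.linearCombination R⟦X⟧ (fun i => T (g i)) f := by
    rw [map_sub, hm, linearCombination_C_add_X_smul]
    simp
  obtain ⟨h, hh⟩ := hT (m - ∑ i, a i • g i) (by simp [vanishing, hsub])
  exact ⟨h, X_smul_injective (hh.symm.trans hsub)⟩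

end Algebra

variable {𝕜 M J κ : Type*} [RCLike 𝕜] [NormedAddCommGroup M] [InnerProductSpace 𝕜 M] [Fintype κ]
  {T : M →ₗ[𝕜] J → 𝕜⟦X⟧}

theorem linearIndependent_of_orthogonal_vanishing (b : OrthonormalBasis κ 𝕜 (vanishing T)ᗮ) :
    LinearIndependent 𝕜⟦X⟧ fun i => T (b i) := by
  have hb : LinearIndependent 𝕜 fun i => (b i : M) :=
    b.orthonormal.linearIndependent.map' (vanishing T)ᗮ.subtype (Submodule.ker_subtype _)
  refine linearIndependent_of_evalZero (hb.map (f := evalZero ∘ₗ T) ?_)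
  refine (vanishing T).orthogonal_disjoint.symm.mono_left (Submodule.span_le.2 ?_)
  rintro _ ⟨i, rfl⟩
  exact (b i).2

variable [(vanishing T).HasOrthogonalProjection]

theorem IsNearlyInvariant.exists_decomposition (hT : IsNearlyInvariant T)
    (hX : ∀ h m, T m = (X : 𝕜⟦X⟧) • T h → ‖h‖ ≤ ‖m‖)
    (b : OrthonormalBasis κ 𝕜 (vanishing T)ᗮ) (m : M) :
    ∃ (a : EuclideanSpace 𝕜 κ) (h : M), ‖a‖ ^ 2 + ‖h‖ ^ 2 ≤ ‖m‖ ^ 2 ∧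
      T m = ∑ i, a i • T (b i) + (X : 𝕜⟦X⟧) • T h := by
  set u := (vanishing T).orthogonalProjectionOnto m
  set w := (vanishing T)ᗮ.orthogonalProjectionOnto m
  obtain ⟨h, hh⟩ := hT u u.2
  have hw : (w : M) = ∑ i, b.repr w i • (b i : M) := by
    conv_lhs => rw [← b.sum_repr w]
    simp
  have hm : (u : M) + w = m := (vanishing T).starProjection_add_starProjection_orthogonal m
  refine ⟨b.repr w, h, ?_, ?_⟩
  · rw [(vanishing T).norm_sq_eq_add_norm_sq_projection m, b.repr.norm_map, add_comm]
    gcongr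
    exact hX h u hh
  · rw [← hh, ← hm, map_add, hw]
    simp [add_comm]

theorem IsNearlyInvariant.exists_expansion (hT : IsNearlyInvariant T)
    (hX : ∀ h m, T m = (X : 𝕜⟦X⟧) • T h → ‖h‖ ≤ ‖m‖)
    (b : OrthonormalBasis κ 𝕜 (vanishing T)ᗮ) (m : M) :
    ∃ a : ℕ → EuclideanSpace 𝕜 κ, (∀ N, ∑ k ∈ Finset.range N, ‖a k‖ ^ 2 ≤ ‖m‖ ^ 2) ∧
      T m = Fintype.linearCombination 𝕜⟦X⟧ (fun i => T (b i)) (vecSeries fun k i => a k i) := by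
  choose a σ hnorm hdecomp using hT.exists_decomposition hX b
  refine ⟨fun k => a (σ^[k] m), fun N => ?_, sub_eq_zero.1 ?_⟩
  · suffices ∑ k ∈ Finset.range N, ‖a (σ^[k] m)‖ ^ 2 + ‖σ^[N] m‖ ^ 2 ≤ ‖m‖ ^ 2 from
      (le_add_of_nonneg_right (sq_nonneg _)).trans this
    induction N with
    | zero => simp
    | succ N ih =>
      rw [Finset.sum_range_succ, Function.iterate_succ_apply']
      linarith [hnorm (σ^[N] m)]
  · let remainder (m : M) : J → 𝕜⟦X⟧ :=
      T m - Fintype.linearCombination 𝕜⟦X⟧ (fun i => T (b i)) (vecSeries fun k i => a (σ^[k] m) i)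
    have hrem (m : M) : remainder m = (X : 𝕜⟦X⟧) • remainder (σ m) := by
      simp only [remainder]
      rw [vecSeries_eq_C_add_X_smul, linearCombination_C_add_X_smul, hdecomp m, smul_sub]
      simp
    refine eq_zero_of_forall_mem_eq_X_smul (S := Set.range remainder) ?_ ⟨m, rfl⟩
    rintro _ ⟨m, rfl⟩
    exact ⟨remainder (σ m), ⟨σ m, rfl⟩, hrem m⟩

end NearlyInvariant

section Taylor

variable {n r : ℕ}

/-- The vector of Taylor series at `0` of the coordinates of an element of `H²(𝔻, ℂⁿ)`. -/
def taylor : H2V n →ₗ[ℂ] Fin n → ℂ⟦X⟧ where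
  toFun f := vecSeries fun k i => f k i
  map_add' f g := by ext; simp
  map_smul' c f := by ext; simp

theorem coeff_taylor (f : H2V n) (k : ℕ) (i : Fin n) : coeff k (taylor f i) = f k i :=
  coeff_vecSeries (fun k i => f k i) k i

theorem evalZero_taylor (f : H2V n) : evalZero (taylor f) = (f 0).ofLp :=
  evalZero_vecSeries fun k i => f k i

theorem taylor_injective : Function.Injective (taylor (n := n)) := fun f g h => by
  ext k i
  rw [← coeff_taylor, h, coeff_taylor]

theorem taylor_eq_C_add_X_smul (f : H2V n) :
    taylor f = (fun i => C (f 0 i)) + (X : ℂ⟦X⟧) • taylor (bshV f) :=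
  vecSeries_eq_C_add_X_smul fun k i => f k i

theorem taylor_fshV (f : H2V n) : taylor (fshV f) = (X : ℂ⟦X⟧) • taylor f := by
  have hzero : (fun i => C (fshV f 0 i)) = (0 : Fin n → ℂ⟦X⟧) := funext fun _ => map_zero C
  have hshift : bshV (fshV f) = f := rfl
  rw [taylor_eq_C_add_X_smul, hzero, zero_add, hshift]

theorem summable_norm_coeff_taylor (f : H2V n) (i : Fin n) {z : ℂ} (hz : z ∈ Metric.ball 0 1) :
    Summable fun k => ‖coeff k (taylor f i) * z ^ k‖ := by
  have hz : ‖z‖ < 1 := by simpa using hz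
  refine .of_nonneg_of_le (fun _ => norm_nonneg _) (fun k => ?_)
    ((summable_geometric_of_lt_one (norm_nonneg z) hz).mul_left ‖f‖)
  rw [norm_mul, norm_pow, coeff_taylor]
  gcongr
  exact (PiLp.norm_apply_le (f k) i).trans (lp.norm_apply_le_norm two_ne_zero f k)

theorem evC_eq_tsum_coeff_taylor (f : H2V n) (z : ℂ) (i : Fin n) :
    evC f z i = ∑' k, coeff k (taylor f i) * z ^ k := by
  simp only [evC, coeff_taylor]

theorem hasSum_coeff_taylor (f : H2V n) (i : Fin n) {z : ℂ} (hz : z ∈ Metric.ball 0 1) :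
    HasSum (fun k => coeff k (taylor f i) * z ^ k) (evC f z i) := by
  rw [evC_eq_tsum_coeff_taylor]
  exact (summable_norm_coeff_taylor f i hz).of_norm.hasSum

theorem hasSum_coeff_linearCombination_taylor (v : Fin r → H2V n) (f : H2V r) (j : Fin n) {z : ℂ}
    (hz : z ∈ Metric.ball 0 1) :
    HasSum
      (fun k => coeff k
        (Fintype.linearCombination ℂ⟦X⟧ (fun i => taylor (v i)) (taylor f) j) * z ^ k)
      (∑ i, evC f z i * evC (v i) z j) := by
  simp only [Fintype.linearCombination_apply, Finset.sum_apply, Pi.smul_apply, smul_eq_mul,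
    map_sum, Finset.sum_mul, evC_eq_tsum_coeff_taylor]
  exact hasSum_sum fun i _ => hasSum_coeff_mul (summable_norm_coeff_taylor f i hz)
    (summable_norm_coeff_taylor (v i) j hz)

variable {M : Type*}

theorem comap_zH2V_eq_vanishing [AddCommGroup M] [Module ℂ M] {ι : M →ₗ[ℂ] H2V n} :
    (zH2V n).comap ι = vanishing (taylor ∘ₗ ι) := by
  ext m
  change ι m 0 = 0 ↔ evalZero (taylor (ι m)) = 0
  rw [evalZero_taylor]
  exact (WithLp.ofLp_eq_zero 2).symm

theorem isNearlyInvariant_taylor_comp [AddCommGroup M] [Module ℂ M] {ι : M →ₗ[ℂ] H2V n}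
    (hnearly : ∀ f : M, ι f 0 = 0 → ∃ g : M, ι g = bshV (ι f)) :
    IsNearlyInvariant (taylor ∘ₗ ι) := by
  intro m hm
  rw [← comap_zH2V_eq_vanishing] at hm
  have hm : ι m 0 = 0 := hm
  obtain ⟨h, hh⟩ := hnearly m hm
  refine ⟨h, ?_⟩
  change taylor (ι m) = _ • taylor (ι h)
  rw [hh, taylor_eq_C_add_X_smul, hm]
  simp [← Pi.zero_def]

variable [NormedAddCommGroup M] [InnerProductSpace ℂ M] {ι : M →ₗ[ℂ] H2V n}

theorem gRel_iff_taylor_eq {g : Fin r → M} {f : H2V r} {m : M} :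
    GRel ι g f m ↔
      taylor (ι m) = Fintype.linearCombination ℂ⟦X⟧ (fun i => taylor (ι (g i))) (taylor f) := by
  constructor
  · intro h
    ext1 j
    have hball := Metric.ball_mem_nhds (0 : ℂ) one_pos
    refine eq_of_eventually_hasSum_coeff (F := fun z => evC (ι m) z j) ?_ ?_
    · filter_upwards [hball] with z hz using hasSum_coeff_taylor (ι m) j hz
    · filter_upwards [hball] with z hz
      rw [h z hz j]
      exact hasSum_coeff_linearCombination_taylor _ f j hz
  · intro h z hz j
    refine (hasSum_coeff_taylor (ι m) j hz).unique ?_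
    rw [h]
    exact hasSum_coeff_linearCombination_taylor _ f j hz

theorem hasOrthogonalProjection_comap_zH2V [CompleteSpace M] (hι : Continuous ι) :
    ((zH2V n).comap ι).HasOrthogonalProjection := by
  have hclosed : IsClosed (zH2V n : Set (H2V n)) :=
    (lp.evalCLM ℂ (fun _ : ℕ => EuclideanSpace ℂ (Fin n)) 2 0).isClosed_ker
  have : CompleteSpace ((zH2V n).comap ι) := (hclosed.preimage hι).completeSpace_coe
  infer_instance

/-- The space `N = {f ∈ H²(𝔻, ℂʳ) : Gf ∈ M}`, where `G` has columns `g₁, …, g_r`. -/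
def coeffSpace (ι : M →ₗ[ℂ] H2V n) (g : Fin r → M) : Submodule ℂ (H2V r) :=
  (taylor ∘ₗ ι).range.comap
    ((Fintype.linearCombination ℂ⟦X⟧ fun i => taylor (ι (g i))).restrictScalars ℂ ∘ₗ taylor)

theorem mem_coeffSpace {g : Fin r → M} {f : H2V r} : f ∈ coeffSpace ι g ↔ ∃ m, GRel ι g f m :=
  exists_congr fun _ => gRel_iff_taylor_eq.symm

theorem bshV_mem_coeffSpace (hT : IsNearlyInvariant (taylor ∘ₗ ι)) {g : Fin r → M} {f : H2V r}
    (hf : f ∈ coeffSpace ι g) : bshV f ∈ coeffSpace ι g := by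
  obtain ⟨m, hm⟩ := mem_coeffSpace.1 hf
  rw [gRel_iff_taylor_eq, taylor_eq_C_add_X_smul f] at hm
  obtain ⟨h, hh⟩ := hT.exists_eq_linearCombination hm
  exact mem_coeffSpace.2 ⟨h, gRel_iff_taylor_eq.2 hh⟩

theorem GRel.right_unique (hι : Function.Injective ι) {g : Fin r → M} {f : H2V r} {m m' : M}
    (h : GRel ι g f m) (h' : GRel ι g f m') : m = m' :=
  hι (taylor_injective ((gRel_iff_taylor_eq.1 h).trans (gRel_iff_taylor_eq.1 h').symm))

theorem GRel.left_unique {b : OrthonormalBasis (Fin r) ℂ (vanishing (taylor ∘ₗ ι))ᗮ}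
    {f f' : H2V r} {m : M} (h : GRel ι (fun i => b i) f m) (h' : GRel ι (fun i => b i) f' m) :
    f = f' :=
  taylor_injective
    ((linearIndependent_of_orthogonal_vanishing b).fintypeLinearCombination_injective
      ((gRel_iff_taylor_eq.1 h).symm.trans (gRel_iff_taylor_eq.1 h')))

theorem exists_gRel_norm_le [(vanishing (taylor ∘ₗ ι)).HasOrthogonalProjection]
    (hT : IsNearlyInvariant (taylor ∘ₗ ι)) (hz : ∀ h m : M, ι m = fshV (ι h) → ‖h‖ ≤ ‖m‖)
    (b : OrthonormalBasis (Fin r) ℂ (vanishing (taylor ∘ₗ ι))ᗮ) (m : M) :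
    ∃ f : H2V r, GRel ι (fun i => b i) f m ∧ ‖f‖ ≤ ‖m‖ := by
  have hX (h m : M) (hm : taylor (ι m) = (X : ℂ⟦X⟧) • taylor (ι h)) : ‖h‖ ≤ ‖m‖ :=
    hz h m (taylor_injective (hm.trans (taylor_fshV _).symm))
  obtain ⟨a, hnorm, ha⟩ := hT.exists_expansion hX b m
  obtain ⟨f, rfl, hf⟩ := exists_lp_norm_le_of_sum_range_le (p := 2) (a := a) (by simp)
    (norm_nonneg m) (by simpa using hnorm)
  exact ⟨f, gRel_iff_taylor_eq.2 ha, hf⟩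

end Taylor

theorem stmt3_general (n r : ℕ)
    (M : Type*) [NormedAddCommGroup M] [InnerProductSpace ℂ M]
    (ι : M →ₗ[ℂ] H2V n) (hinj : Function.Injective ι)
    [((zH2V n).comap ι).HasOrthogonalProjection]
    (hnearly : ∀ f : M, ι f 0 = 0 → ∃ g : M, ι g = bshV (ι f))
    (hz : ∀ h m : M, ι m = fshV (ι h) → ‖h‖ ≤ ‖m‖)
    (g : Fin r → M) (hON : Orthonormal ℂ g)
    (hgspan : Submodule.span ℂ (Set.range g) = ((zH2V n).comap ι)ᗮ) :
    ∃ N : Submodule ℂ (H2V r),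
      (N : Set (H2V r)) = {f : H2V r | ∃ m : M, GRel ι g f m} ∧
      (∀ f ∈ N, bshV f ∈ N) ∧
      (∀ m : M, ∃! f : H2V r, GRel ι g f m) ∧
      (∀ (f : H2V r) (m m' : M), GRel ι g f m → GRel ι g f m' → m = m') ∧
      (∀ (f : H2V r) (m : M), GRel ι g f m → ‖f‖ ≤ ‖m‖) := by
  have hT := isNearlyInvariant_taylor_comp hnearly
  have : (vanishing (taylor ∘ₗ ι)).HasOrthogonalProjection :=
    comap_zH2V_eq_vanishing (ι := ι) ▸ ‹_›
  rw [comap_zH2V_eq_vanishing] at hgspan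
  obtain ⟨b, hb⟩ := exists_orthonormalBasis_coe_eq hON hgspan
  obtain rfl : (fun i => (b i : M)) = g := funext hb
  have hex := exists_gRel_norm_le hT hz b
  refine ⟨coeffSpace ι _, Set.ext fun f => mem_coeffSpace, fun f => bshV_mem_coeffSpace hT,
    fun m => ?_, fun f m m' => GRel.right_unique hinj, fun f m hf => ?_⟩
  · obtain ⟨f, hf, -⟩ := hex m
    exact ⟨f, hf, fun f' hf' => hf'.left_unique hf⟩
  · obtain ⟨f', hf', hle⟩ := hex m
    rwa [hf.left_unique hf']

/- STATEMENT 3: Let M be a nonzero Hilbert space contractively contained in H²(𝔻, ℂⁿ),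
nearly invariant under the backward shift S*, with ‖zh‖_M ≥ ‖h‖_M whenever zh ∈ M.  Let
{g₁, …, g_r} (1 ≤ r ≤ n) be an orthonormal basis of M ⊖ (M ∩ zH²(𝔻, ℂⁿ)) and let G be the
matrix-valued function with columns g₁, …, g_r.  Then N := {f ∈ H²(𝔻, ℂ^r) : Gf ∈ M} is a
vector subspace of H²(𝔻, ℂ^r) invariant under S*, the map 𝒢 : N → M, f ↦ Gf is a linear
bijection, and ‖h‖_M ≥ ‖f‖₂ whenever h = Gf with f ∈ N. -/
theorem stmt3 (n r : ℕ) (hr1 : 1 ≤ r) (hrn : r ≤ n)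
    (M : Type*) [NormedAddCommGroup M] [InnerProductSpace ℂ M] [CompleteSpace M]
    [Nontrivial M]
    (ι : M →ₗ[ℂ] H2V n) (hinj : Function.Injective ι)
    (hcontr : ∀ m : M, ‖ι m‖ ≤ ‖m‖)
    -- nearly invariant under S* :
    (hnearly : ∀ f : M, ι f 0 = 0 → ∃ g : M, ι g = bshV (ι f))
    -- ‖zh‖_M ≥ ‖h‖_M whenever zh ∈ M :
    (hz : ∀ h m : M, ι m = fshV (ι h) → ‖h‖ ≤ ‖m‖)
    -- {g₁, …, g_r} is an orthonormal basis of M ⊖ (M ∩ zH²(𝔻, ℂⁿ)) :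
    (g : Fin r → M) (hON : Orthonormal ℂ g)
    (hgmem : ∀ i, g i ∈ ((zH2V n).comap ι)ᗮ)
    (hgspan : Submodule.span ℂ (Set.range g) = ((zH2V n).comap ι)ᗮ) :
    ∃ N : Submodule ℂ (H2V r),
      -- N = {f ∈ H²(𝔻, ℂ^r) : Gf ∈ M}
      (N : Set (H2V r)) = {f : H2V r | ∃ m : M, GRel ι g f m} ∧
      -- N is invariant under the backward shift
      (∀ f ∈ N, bshV f ∈ N) ∧
      -- 𝒢 : N → M, f ↦ Gf is a bijection (each h ∈ M is Gf for a unique f, and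
      -- Gf determines a unique element of M)
      (∀ m : M, ∃! f : H2V r, GRel ι g f m) ∧
      (∀ (f : H2V r) (m m' : M), GRel ι g f m → GRel ι g f m' → m = m') ∧
      -- ‖h‖_M ≥ ‖f‖₂ whenever h = Gf
      (∀ (f : H2V r) (m : M), GRel ι g f m → ‖f‖ ≤ ‖m‖) := by
  have hι : Continuous ι := (ι.mkContinuous 1 (by simpa using hcontr)).continuous
  have := hasOrthogonalProjection_comap_zH2V hι
  exact stmt3_general n r M ι hinj hnearly hz g hON hgspan
end
end

section
/- Let T be a bounded operator on a Hilbert space H with ‖Th‖_H ≥ ‖h‖_H for all h ∈ H. Let M be a Hilbert space contractively contained in H such that h ∈ M whenever Th ∈ M, and ‖Th‖_M ≥ ‖h‖_M whenever Th ∈ M. Let P denote the orthogonal projection of M onto the closed subspace M ∩ TH, let Q = I_M − P, and let R : M → H be the map sending h to the unique element Rh ∈ H with T(Rh) = Ph. Then R maps M into M and is a contraction on M, and for every h ∈ M and every nonnegative integer m: h = Σ_{k=0}^m T^k Q R^k h + T^{m+1} R^{m+1} h, and ‖h‖²_M ≥ Σ_{k=0}^m ‖Q R^k h‖²_M. -/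
/-!
Since `R` undoes `T` on the part `P h` of `h` lying in `TH`, one has `h = Q h + T R h`. The summands
of `h = Q h + P h` are orthogonal in `M` and `‖R h‖ ≤ ‖T R h‖ = ‖P h‖` there, so
`‖Q h‖² + ‖R h‖² ≤ ‖h‖²`. Iterating the first relation along the orbit `h, R h, R² h, …` gives the
expansion of `h`; summing the second one telescopes to the norm estimate.
-/

section Iterate

variable {X : Type*} {R : X → X}

theorem eq_sum_range_pow_apply_iterate_add {S E : Type*} [Semiring S] [AddCommMonoid E]
    [Module S E] {T : Module.End S E} {f g : X → E} (hfg : ∀ x, f x = g x + T (f (R x)))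
    (x : X) (n : ℕ) :
    f x = ∑ k ∈ Finset.range n, (T ^ k) (g (R^[k] x)) + (T ^ n) (f (R^[n] x)) := by
  induction n with
  | zero => simp
  | succ n ih =>
    calc
      f x = ∑ k ∈ Finset.range n, (T ^ k) (g (R^[k] x)) +
          (T ^ n) (g (R^[n] x) + T (f (R (R^[n] x)))) := by rw [← hfg, ← ih]
      _ = ∑ k ∈ Finset.range (n + 1), (T ^ k) (g (R^[k] x)) +
          (T ^ (n + 1)) (f (R^[n + 1] x)) := by
        rw [map_add, Finset.sum_range_succ, pow_succ, Module.End.mul_apply,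
          Function.iterate_succ_apply', add_assoc]

theorem sum_range_iterate_add_le {α : Type*} [AddCommMonoid α] [Preorder α] [AddLeftMono α]
    {f g : X → α} (hfg : ∀ x, g x + f (R x) ≤ f x) (x : X) (n : ℕ) :
    ∑ k ∈ Finset.range n, g (R^[k] x) + f (R^[n] x) ≤ f x := by
  induction n with
  | zero => simp
  | succ n ih =>
    calc
      ∑ k ∈ Finset.range (n + 1), g (R^[k] x) + f (R^[n + 1] x)
          = ∑ k ∈ Finset.range n, g (R^[k] x) + (g (R^[n] x) + f (R (R^[n] x))) := by
        rw [Finset.sum_range_succ, Function.iterate_succ_apply', add_assoc]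
      _ ≤ ∑ k ∈ Finset.range n, g (R^[k] x) + f (R^[n] x) := by gcongr; exact hfg _
      _ ≤ f x := ih

end Iterate

theorem exists_apply_eq_of_mem_comap_range {S H M : Type*} [Semiring S] [AddCommMonoid H]
    [Module S H] [AddCommMonoid M] [Module S M] {T : Module.End S H} {ι : M →ₗ[S] H}
    (hT : ∀ h : H, T h ∈ LinearMap.range ι → h ∈ LinearMap.range ι)
    {p : M} (hp : p ∈ (LinearMap.range T).comap ι) : ∃ r : M, T (ι r) = ι p := by
  obtain ⟨x, hx : T x = ι p⟩ := hp
  obtain ⟨r, rfl⟩ := hT x ⟨p, hx.symm⟩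
  exact ⟨r, hx⟩

section Orthogonal

variable {𝕜 M : Type*} [RCLike 𝕜] [NormedAddCommGroup M] [InnerProductSpace 𝕜 M]
  {K : Submodule 𝕜 M}

theorem norm_sub_sq_add_norm_sq_eq_of_sub_mem_orthogonal {x p : M} (hp : p ∈ K)
    (hx : x - p ∈ Kᗮ) : ‖x - p‖ ^ 2 + ‖p‖ ^ 2 = ‖x‖ ^ 2 := by
  have inner_eq_zero : inner 𝕜 (x - p) p = 0 := K.inner_left_of_mem_orthogonal hp hx
  simpa only [sub_add_cancel, ← sq] using
    (norm_add_sq_eq_norm_sq_add_norm_sq_of_inner_eq_zero (x - p) p inner_eq_zero).symm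

theorem norm_sub_sq_add_norm_sq_le_of_sub_mem_orthogonal {x p r : M} (hp : p ∈ K)
    (hx : x - p ∈ Kᗮ) (hr : ‖r‖ ≤ ‖p‖) : ‖x - p‖ ^ 2 + ‖r‖ ^ 2 ≤ ‖x‖ ^ 2 := by
  rw [← norm_sub_sq_add_norm_sq_eq_of_sub_mem_orthogonal hp hx]
  gcongr

end Orthogonal

theorem stmt5_general {𝕜 H M : Type*} [RCLike 𝕜] [AddCommGroup H] [Module 𝕜 H]
    [NormedAddCommGroup M] [InnerProductSpace 𝕜 M] (T : Module.End 𝕜 H) (ι : M →ₗ[𝕜] H)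
    (hnearly : ∀ h : H, T h ∈ LinearMap.range ι → h ∈ LinearMap.range ι)
    (hnorm : ∀ m m' : M, ι m = T (ι m') → ‖m'‖ ≤ ‖m‖)
    (P : M → M) (hPmem : ∀ m, P m ∈ (LinearMap.range T).comap ι)
    (hPorth : ∀ m, m - P m ∈ ((LinearMap.range T).comap ι)ᗮ) :
    ∃ R : M → M,
      (∀ m, T (ι (R m)) = ι (P m)) ∧
      (∀ m, ‖R m‖ ≤ ‖m‖) ∧
      ∀ (h : M) (m : ℕ),
        ι h = ∑ k ∈ Finset.range (m + 1), (T ^ k) (ι (R^[k] h - P (R^[k] h)))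
                + (T ^ (m + 1)) (ι (R^[m + 1] h)) ∧
        ∑ k ∈ Finset.range (m + 1), ‖R^[k] h - P (R^[k] h)‖ ^ 2 ≤ ‖h‖ ^ 2 := by
  choose R hR using fun m ↦ exists_apply_eq_of_mem_comap_range hnearly (hPmem m)
  have decomposition (m : M) : ι m = ι (m - P m) + T (ι (R m)) := by
    rw [hR, ← map_add, sub_add_cancel]
  have energy (m : M) : ‖m - P m‖ ^ 2 + ‖R m‖ ^ 2 ≤ ‖m‖ ^ 2 :=
    norm_sub_sq_add_norm_sq_le_of_sub_mem_orthogonal (hPmem m) (hPorth m) (hnorm _ _ (hR m).symm)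
  refine ⟨R, hR, fun m ↦ ?_, fun h m ↦ ⟨?_, ?_⟩⟩
  · exact (sq_le_sq₀ (norm_nonneg _) (norm_nonneg _)).1
      (le_of_add_le_of_nonneg_right (energy m) (sq_nonneg _))
  · exact eq_sum_range_pow_apply_iterate_add decomposition h (m + 1)
  · exact le_of_add_le_of_nonneg_left
      (sum_range_iterate_add_le (f := fun m ↦ ‖m‖ ^ 2) energy h (m + 1)) (sq_nonneg _)

theorem stmt5
    (H : Type*) [NormedAddCommGroup H] [InnerProductSpace ℂ H] [CompleteSpace H]
    (M : Type*) [NormedAddCommGroup M] [InnerProductSpace ℂ M] [CompleteSpace M]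
    (T : H →L[ℂ] H) (hT : ∀ h : H, ‖h‖ ≤ ‖T h‖)
    (ι : M →ₗ[ℂ] H) (hinj : Function.Injective ι)
    (hcontr : ∀ m : M, ‖ι m‖ ≤ ‖m‖)
    -- Th ∈ M → h ∈ M :
    (hnearly : ∀ h : H, (∃ m : M, ι m = T h) → ∃ m : M, ι m = h)
    -- ‖Th‖_M ≥ ‖h‖_M whenever Th ∈ M :
    (hnorm : ∀ m m' : M, ι m = T (ι m') → ‖m'‖ ≤ ‖m‖)
    -- P is the orthogonal projection of M onto K := M ∩ TH :
    (P : M →ₗ[ℂ] M)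
    (hPmem : ∀ m : M, P m ∈ (LinearMap.range (T : H →ₗ[ℂ] H)).comap ι)
    (hPfix : ∀ m ∈ (LinearMap.range (T : H →ₗ[ℂ] H)).comap ι, P m = m)
    (hPorth : ∀ m : M, m - P m ∈ ((LinearMap.range (T : H →ₗ[ℂ] H)).comap ι)ᗮ) :
    -- R maps M into M (T(Rh) = Ph), R is a contraction on M, and the decomposition holds:
    ∃ R : M → M,
      (∀ m : M, T (ι (R m)) = ι (P m)) ∧
      (∀ m : M, ‖R m‖ ≤ ‖m‖) ∧
      (∀ h : M, ∀ m : ℕ,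
        ι h = (∑ k ∈ Finset.range (m + 1), (T ^ k) (ι (R^[k] h - P (R^[k] h))))
                + (T ^ (m + 1)) (ι (R^[m + 1] h)) ∧
        ∑ k ∈ Finset.range (m + 1), ‖R^[k] h - P (R^[k] h)‖ ^ 2 ≤ ‖h‖ ^ 2) := by
  simpa only [← ContinuousLinearMap.toLinearMap_pow, ContinuousLinearMap.coe_coe] using
    stmt5_general (T : H →ₗ[ℂ] H) ι hnearly hnorm P hPmem hPorth
end

section
/- Let U : H²(𝔻) → H²(𝔻) be the bounded linear operator determined by U(1) = 1, U(z) = √2·z, U(z²) = √2·z², and U(zⁿ) = zⁿ for n ≥ 3. Let M = span{1 + z, z + z²} with the norm ‖f‖_M := ‖Uf‖₂. Then M, with this norm, is a Hilbert space contractively contained in H²(𝔻), M is nearly invariant under the backward shift S*, and ‖zh‖_M ≥ ‖h‖_M whenever zh ∈ M. -/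
noncomputable section
open scoped ENNReal

/-- The Hardy space `H²(𝔻)`, identified isometrically with the space of square-summable
sequences of Taylor coefficients; `lp.single 2 n 1` corresponds to `zⁿ`. -/
abbrev H2 := lp (fun _ : ℕ => ℂ) 2

/-- The backward shift `S*` on `H²(𝔻)`. -/
def bsh (f : H2) : H2 :=
  ⟨fun k => f (k + 1), by
    apply memℓp_gen
    have hf : Summable fun i => ‖f i‖ ^ (2 : ℝ≥0∞).toReal :=
      (memℓp_gen_iff (by norm_num)).1 (lp.memℓp f)
    exact hf.comp_injective (add_left_injective 1)⟩

/-- The forward shift (multiplication by `z`) on `H²(𝔻)`. -/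
def fsh (f : H2) : H2 :=
  ⟨fun k => match k with | 0 => 0 | (j + 1) => f j, by
    apply memℓp_gen
    have hf : Summable fun i => ‖f i‖ ^ (2 : ℝ≥0∞).toReal :=
      (memℓp_gen_iff (by norm_num)).1 (lp.memℓp f)
    apply (summable_nat_add_iff 1).mp
    convert hf using 1⟩

/-! The vectors `1, z, z²` are eigenvectors of `U`, so on polynomials of degree at most two
`‖U f‖²` is a weighted sum of squared coefficients.  The weights are at least `1`, which makes the
inclusion contractive.  A member of `M` vanishing at `0` is a multiple of `z + z²`, and dividing it
by `z` gives the same multiple of `1 + z`: the weight of `z²` is traded for the smaller one of `1`.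
-/

section Diagonal

variable {α 𝕜 : Type*} [DecidableEq α] [NormedField 𝕜] {p : ℝ≥0∞} {s : Finset α}

lemma eq_sum_single_of_forall_notMem_eq_zero {E : α → Type*} [∀ i, NormedAddCommGroup (E i)]
    {f : lp E p} (hf : ∀ i ∉ s, f i = 0) : f = ∑ i ∈ s, lp.single p i (f i) := by
  ext i
  simp only [lp.coeFn_sum, lp.coeFn_single, Finset.sum_apply, Finset.sum_pi_single]
  split_ifs with hi
  exacts [rfl, hf i hi]

variable {U : lp (fun _ : α => 𝕜) p →ₗ[𝕜] lp (fun _ : α => 𝕜) p} {w : α → 𝕜}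
  {f : lp (fun _ : α => 𝕜) p}

lemma map_eq_sum_single_of_diagonal
    (hU : ∀ i ∈ s, U (lp.single p i 1) = w i • lp.single p i 1) (hf : ∀ i ∉ s, f i = 0) :
    U f = ∑ i ∈ s, lp.single p i (w i * f i) := by
  have hsingle (i : α) (c : 𝕜) :
      (lp.single p i c : lp (fun _ : α => 𝕜) p) = c • lp.single p i 1 := by
    rw [← lp.single_smul, smul_eq_mul, mul_one]
  conv_lhs => rw [eq_sum_single_of_forall_notMem_eq_zero hf, map_sum]
  refine Finset.sum_congr rfl fun i hi => ?_
  rw [hsingle, map_smul, hU i hi, smul_smul, mul_comm, ← hsingle]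

lemma norm_map_rpow_eq_sum_of_diagonal (hp : 0 < p.toReal)
    (hU : ∀ i ∈ s, U (lp.single p i 1) = w i • lp.single p i 1) (hf : ∀ i ∉ s, f i = 0) :
    ‖U f‖ ^ p.toReal = ∑ i ∈ s, (‖w i‖ * ‖f i‖) ^ p.toReal := by
  rw [map_eq_sum_single_of_diagonal hU hf, lp.norm_sum_single hp]
  simp only [norm_mul]

lemma norm_le_norm_map_of_diagonal (hp : 0 < p.toReal)
    (hU : ∀ i ∈ s, U (lp.single p i 1) = w i • lp.single p i 1) (hw : ∀ i ∈ s, 1 ≤ ‖w i‖)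
    (hf : ∀ i ∉ s, f i = 0) : ‖f‖ ≤ ‖U f‖ := by
  rw [← Real.rpow_le_rpow_iff (lp.norm_nonneg' f) (lp.norm_nonneg' _) hp,
    norm_map_rpow_eq_sum_of_diagonal hp hU hf]
  calc ‖f‖ ^ p.toReal = ∑ i ∈ s, ‖f i‖ ^ p.toReal := by
        conv_lhs => rw [eq_sum_single_of_forall_notMem_eq_zero hf]
        exact lp.norm_sum_single hp f s
    _ ≤ ∑ i ∈ s, (‖w i‖ * ‖f i‖) ^ p.toReal := Finset.sum_le_sum fun i hi =>
        Real.rpow_le_rpow (norm_nonneg _)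
          (le_mul_of_one_le_left (norm_nonneg _) (hw i hi)) hp.le

end Diagonal

lemma injOn_of_norm_le_norm_map {R E F : Type*} [Ring R] [NormedAddCommGroup E]
    [SeminormedAddCommGroup F] [Module R E] [Module R F] {U : E →ₗ[R] F} {M : Submodule R E}
    (h : ∀ f ∈ M, ‖f‖ ≤ ‖U f‖) : Set.InjOn U M := by
  refine LinearMap.disjoint_ker_iff_injOn.1 (LinearMap.disjoint_ker.2 fun f hf hUf => ?_)
  simpa [hUf] using h f hf

lemma bsh_fsh (h : H2) : bsh (fsh h) = h := rfl

/-- The subspace `M = span{1 + z, z + z²}` of `H²(𝔻)`, without the norm induced by `U`. -/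
def pairSpan : Submodule ℂ H2 :=
  Submodule.span ℂ {lp.single 2 0 1 + lp.single 2 1 1, lp.single 2 1 1 + lp.single 2 2 1}

instance : FiniteDimensional ℂ pairSpan :=
  FiniteDimensional.span_of_finite ℂ (Set.toFinite _)

lemma pairSpan_combination_apply (a b : ℂ) (n : ℕ) :
    (a • (lp.single 2 0 1 + lp.single 2 1 1) + b • (lp.single 2 1 1 + lp.single 2 2 1) : H2) n =
      (if n = 0 then a else 0) + (if n = 1 then a + b else 0) + if n = 2 then b else 0 := by
  rw [lp.coeFn_add, lp.coeFn_smul, lp.coeFn_smul, lp.coeFn_add, lp.coeFn_add,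
    Pi.add_apply, Pi.smul_apply, Pi.smul_apply, Pi.add_apply, Pi.add_apply]
  simp only [lp.single_apply, Pi.single_apply, smul_eq_mul]
  split_ifs <;> ring

lemma mem_pairSpan_iff {f : H2} :
    f ∈ pairSpan ↔ f 1 = f 0 + f 2 ∧ ∀ n ∉ Finset.range 3, f n = 0 := by
  simp only [Finset.mem_range, not_lt]
  constructor
  · intro hf
    obtain ⟨a, b, rfl⟩ := Submodule.mem_span_pair.1 hf
    simp only [pairSpan_combination_apply]
    exact ⟨by simp, fun n hn => by grind⟩
  · rintro ⟨h1, hf⟩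
    refine Submodule.mem_span_pair.2 ⟨f 0, f 2, ?_⟩
    ext n
    rw [pairSpan_combination_apply]
    match n with
    | 0 => simp
    | 1 => simp [h1]
    | 2 => simp
    | n + 3 => simp [hf (n + 3) (by lia)]

lemma bsh_mem_pairSpan {f : H2} (hf : f ∈ pairSpan) (h0 : f 0 = 0) : bsh f ∈ pairSpan := by
  obtain ⟨h1, hn⟩ := mem_pairSpan_iff.1 hf
  refine mem_pairSpan_iff.2 ⟨?_, fun n h => hn (n + 1) ?_⟩
  · change f 2 = f 1 + f 3
    rw [h1, h0, hn 3 (by simp), zero_add, add_zero]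
  · simp only [Finset.mem_range] at h ⊢
    lia

lemma mem_pairSpan_of_fsh_mem {h : H2} (hf : fsh h ∈ pairSpan) : h ∈ pairSpan :=
  bsh_fsh h ▸ bsh_mem_pairSpan hf rfl

section Weights

variable {U : H2 →ₗ[ℂ] H2} {w : ℕ → ℂ}

lemma norm_map_sq_of_mem_pairSpan
    (hU : ∀ n ∈ Finset.range 3, U (lp.single 2 n 1) = w n • lp.single 2 n 1) {f : H2}
    (hf : f ∈ pairSpan) :
    ‖U f‖ ^ 2 = (‖w 0‖ * ‖f 0‖) ^ 2 + (‖w 1‖ * ‖f 1‖) ^ 2 + (‖w 2‖ * ‖f 2‖) ^ 2 := by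
  simpa [Finset.sum_range_succ] using
    norm_map_rpow_eq_sum_of_diagonal (by simp) hU (mem_pairSpan_iff.1 hf).2

lemma norm_map_le_norm_map_fsh
    (hU : ∀ n ∈ Finset.range 3, U (lp.single 2 n 1) = w n • lp.single 2 n 1)
    (hw : ‖w 0‖ ≤ ‖w 2‖) {h : H2} (hf : fsh h ∈ pairSpan) : ‖U h‖ ≤ ‖U (fsh h)‖ := by
  obtain ⟨hcoeff, hsupp⟩ := mem_pairSpan_iff.1 hf
  have h01 : h 0 = h 1 := hcoeff.trans (zero_add _)
  have h2 : h 2 = 0 := hsupp 3 (by simp)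
  refine (sq_le_sq₀ (norm_nonneg _) (norm_nonneg _)).1 ?_
  calc ‖U h‖ ^ 2 = (‖w 0‖ * ‖h 1‖) ^ 2 + (‖w 1‖ * ‖h 1‖) ^ 2 := by
        simp [norm_map_sq_of_mem_pairSpan hU (mem_pairSpan_of_fsh_mem hf), h01, h2]
    _ ≤ (‖w 2‖ * ‖h 1‖) ^ 2 + (‖w 1‖ * ‖h 1‖) ^ 2 := by gcongr
    _ = (‖w 1‖ * ‖h 0‖) ^ 2 + (‖w 2‖ * ‖h 1‖) ^ 2 := by rw [h01, add_comm]
    _ = ‖U (fsh h)‖ ^ 2 := by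
        rw [norm_map_sq_of_mem_pairSpan hU hf]
        simp [fsh]

end Weights

theorem stmt10_general (U : H2 →ₗ[ℂ] H2) (w : ℕ → ℂ)
    (hU : ∀ n ∈ Finset.range 3, U (lp.single 2 n 1) = w n • lp.single 2 n 1)
    (hw : ∀ n ∈ Finset.range 3, 1 ≤ ‖w n‖) (hw02 : ‖w 0‖ ≤ ‖w 2‖) :
    Set.InjOn U pairSpan ∧ IsComplete (U '' pairSpan) ∧
    (∀ f ∈ pairSpan, ‖f‖ ≤ ‖U f‖) ∧
    (∀ f ∈ pairSpan, f 0 = 0 → bsh f ∈ pairSpan) ∧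
    (∀ h : H2, fsh h ∈ pairSpan → h ∈ pairSpan ∧ ‖U h‖ ≤ ‖U (fsh h)‖) := by
  have hcontr : ∀ f ∈ pairSpan, ‖f‖ ≤ ‖U f‖ := fun f hf =>
    norm_le_norm_map_of_diagonal (by simp) hU hw (mem_pairSpan_iff.1 hf).2
  refine ⟨injOn_of_norm_le_norm_map hcontr, ?_, hcontr, fun f => bsh_mem_pairSpan,
    fun h hf => ⟨mem_pairSpan_of_fsh_mem hf, norm_map_le_norm_map_fsh hU hw02 hf⟩⟩
  exact (pairSpan.map U).complete_of_finiteDimensional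

/- STATEMENT 10: Let U be the bounded operator on H²(𝔻) determined by U(1) = 1,
U(z) = √2 z, U(z²) = √2 z², U(zⁿ) = zⁿ (n ≥ 3), and M = span{1 + z, z + z²} with norm
‖f‖_M := ‖Uf‖₂.  Then M with this norm is a Hilbert space contractively contained in H²(𝔻)
(the map f ↦ Uf is injective on M and its image is complete, so (M, ‖U·‖₂) is a Hilbert
space, and ‖f‖₂ ≤ ‖f‖_M on M), M is nearly S*-invariant, and ‖zh‖_M ≥ ‖h‖_M whenever
zh ∈ M. -/
theorem stmt10
    (U : H2 →L[ℂ] H2)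
    (hU0 : U (lp.single 2 0 1) = lp.single 2 0 1)
    (hU1 : U (lp.single 2 1 1) = (Real.sqrt 2 : ℂ) • lp.single 2 1 1)
    (hU2 : U (lp.single 2 2 1) = (Real.sqrt 2 : ℂ) • lp.single 2 2 1)
    (hUn : ∀ n : ℕ, 3 ≤ n → U (lp.single 2 n 1) = lp.single 2 n 1)
    (M : Submodule ℂ H2)
    (hM : M = Submodule.span ℂ
      {lp.single 2 0 1 + lp.single 2 1 1, lp.single 2 1 1 + lp.single 2 2 1}) :
    -- (M, ‖U·‖₂) is a Hilbert space:
    Set.InjOn U M ∧ IsComplete (U '' M) ∧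
    -- contractively contained in H²(𝔻):
    (∀ f ∈ M, ‖f‖ ≤ ‖U f‖) ∧
    -- nearly invariant under the backward shift:
    (∀ f ∈ M, f 0 = 0 → bsh f ∈ M) ∧
    -- ‖zh‖_M ≥ ‖h‖_M whenever zh ∈ M:
    (∀ h : H2, fsh h ∈ M → h ∈ M ∧ ‖U h‖ ≤ ‖U (fsh h)‖) := by
  have hsqrt : 1 ≤ |√2| := by simp [abs_of_nonneg, Real.one_le_sqrt]
  exact hM ▸ stmt10_general U (fun n => if n = 0 then 1 else (√2 : ℂ))
    (fun n hn => by fin_cases hn <;> simp [hU0, hU1, hU2])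
    (fun n hn => by fin_cases hn <;> simp [hsqrt]) (by simp [hsqrt])
end
end

section
/- Let 𝒟 be the Dirichlet space of analytic functions f(z) = Σ_{i≥0} a_i z^i on the open unit disc with ‖f‖²_𝒟 = Σ_{i≥0} |a_i|²(i + 1) < ∞. Let θ be a bounded analytic function on 𝔻 with ‖θ‖_∞ = 1 and θ(0) > 0, and let M = θ𝒟 = {θf : f ∈ 𝒟} with norm ‖θf‖_M := ‖f‖_𝒟. Then M is a well-defined Hilbert space contractively contained in H²(𝔻), M is nearly invariant under the backward shift S*, ‖zg‖_M ≥ ‖g‖_M whenever zg ∈ M, and M ⊖ (M ∩ zH²(𝔻)) = span{θ}. -/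
noncomputable section
open scoped ENNReal
open Filter

/-- The open unit disc. -/
def Disc : Set ℂ := Metric.ball (0 : ℂ) 1

/-- The value at `z ∈ 𝔻` of `f ∈ H²(𝔻)`. -/
def ev (f : H2) (z : ℂ) : ℂ := ∑' m, f m * z ^ m

/-- Membership in the Dirichlet space `𝒟`: `Σ |aᵢ|²(i+1) < ∞`. -/
def DirMem (f : H2) : Prop := Summable fun i : ℕ => ‖f i‖ ^ 2 * ((i : ℝ) + 1)

/-- The Dirichlet norm `‖f‖_𝒟 = (Σ |aᵢ|²(i+1))^{1/2}`. -/
def DNorm (f : H2) : ℝ := Real.sqrt (∑' i : ℕ, ‖f i‖ ^ 2 * ((i : ℝ) + 1))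

/-- The Dirichlet inner product `⟪f, g⟫_𝒟 = Σ (i+1) conj(aᵢ) bᵢ`. -/
def DInner (f g : H2) : ℂ := ∑' i : ℕ, ((i : ℂ) + 1) * (starRingEnd ℂ) (f i) * g i

/-- `ThetaRel θ h f` says `h = θ·f` on the disc with `f` in the Dirichlet space,
i.e. `h` is the element `θf` of `M = θ𝒟`, with representative `f`. -/
def ThetaRel (θ : ℂ → ℂ) (h f : H2) : Prop :=
  DirMem f ∧ ∀ z ∈ Disc, ev h z = θ z * ev f z

/-! If `F` is analytic on the disc and `|F| ≤ |f|` there for some `f ∈ H²`, then comparing `L²`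
norms of boundary values of the dilations `F(r·)`, `f(r·)` and letting `r → 1` gives `F ∈ H²` and
`‖F‖₂ ≤ ‖f‖₂`. For `|θ| ≤ 1` this makes multiplication by `θ` a contraction of `H²`, so `θ𝒟` sits
contractively in `H²`. As `θ(0) ≠ 0`, an element `θf` of `M` vanishes at `0` exactly when `f`
does, so the backward shift of such a `θf` is `θ S*f`, and `S*` decreases the weights `i + 1`.
Finally `θf` is orthogonal to `M ∩ zH²` precisely when `f` is orthogonal in `𝒟` to every `zⁿ`,
`n ≥ 1`, that is, when `f` is constant. -/

namespace H2

lemma summable_coeff_mul_pow (f : H2) {z : ℂ} (hz : z ∈ Disc) :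
    Summable fun n => f n * z ^ n := by
  have hz' : ‖z‖ < 1 := by simpa [Disc] using hz
  refine .of_norm_bounded ((summable_geometric_of_lt_one (norm_nonneg z) hz').mul_left ‖f‖)
    fun n => ?_
  rw [norm_mul, norm_pow]
  gcongr
  exact lp.norm_apply_le_norm two_ne_zero f n

lemma hasFPowerSeriesOnBall_ev (f : H2) :
    HasFPowerSeriesOnBall (ev f) (.ofScalars ℂ fun n => f n) 0 1 where
  r_le := by
    simpa using FormalMultilinearSeries.le_radius_of_bound (.ofScalars ℂ fun n => f n) ‖f‖ (r := 1)
      fun n => by simpa using lp.norm_apply_le_norm two_ne_zero f n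
  r_pos := one_pos
  hasSum {z} hz := by
    have hz' : z ∈ Disc := by simpa [Disc, ← ENNReal.coe_one, Metric.eball_coe] using hz
    simpa [FormalMultilinearSeries.ofScalars_apply_eq, mul_comm, ev]
      using (summable_coeff_mul_pow f hz').hasSum

lemma differentiableOn_ev (f : H2) : DifferentiableOn ℂ (ev f) Disc := by
  simpa [Disc, ← ENNReal.coe_one, Metric.eball_coe] using
    (hasFPowerSeriesOnBall_ev f).differentiableOn

lemma eq_of_ev_eventuallyEq {f g : H2} (h : ev f =ᶠ[nhds 0] ev g) : f = g := by
  have hf := (hasFPowerSeriesOnBall_ev f).hasFPowerSeriesAt.congr h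
  have hseries := hf.eq_formalMultilinearSeries (hasFPowerSeriesOnBall_ev g).hasFPowerSeriesAt
  ext n
  exact congrFun (FormalMultilinearSeries.ofScalars_series_injective ℂ ℂ hseries) n

lemma ev_zero (f : H2) : ev f 0 = f 0 := by
  rw [ev, tsum_eq_single 0 fun n hn => by simp [hn]]
  simp

lemma ev_eq_mul_ev_bsh {f : H2} (hf : f 0 = 0) {z : ℂ} (hz : z ∈ Disc) :
    ev f z = z * ev (bsh f) z := by
  rw [ev, (summable_coeff_mul_pow f hz).tsum_eq_zero_add, hf, zero_mul, zero_add, ev,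
    ← tsum_mul_left]
  exact tsum_congr fun n => by simp only [bsh]; ring

/-- The monomial `c zⁿ` as an element of `H²(𝔻)`. -/
def monomial (n : ℕ) (c : ℂ) : H2 := lp.single 2 n c

lemma monomial_apply_of_ne {m n : ℕ} (h : m ≠ n) (c : ℂ) : monomial n c m = 0 :=
  lp.single_apply_ne (E := fun _ => ℂ) 2 n c h

lemma monomial_apply_self (n : ℕ) (c : ℂ) : monomial n c n = c :=
  lp.single_apply_self (E := fun _ => ℂ) 2 n c

lemma ev_monomial (n : ℕ) (c z : ℂ) : ev (monomial n c) z = c * z ^ n := by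
  rw [ev, tsum_eq_single n fun m hm => by rw [monomial_apply_of_ne hm, zero_mul],
    monomial_apply_self]

end H2

lemma zero_mem_disc : (0 : ℂ) ∈ Disc := Metric.mem_ball_self one_pos

lemma disc_mem_nhds_zero : Disc ∈ nhds (0 : ℂ) := Metric.ball_mem_nhds 0 one_pos

lemma eqOn_disc_of_eqOn_id_mul {f g : ℂ → ℂ} (hf : ContinuousAt f 0) (hg : ContinuousAt g 0)
    (h : ∀ z ∈ Disc, z * f z = z * g z) : ∀ z ∈ Disc, f z = g z := by
  have hne : ∀ z ∈ Disc, z ≠ 0 → f z = g z := fun z hz hz0 => mul_left_cancel₀ hz0 (h z hz)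
  have hzero : f =ᶠ[nhds 0] g := (hf.eventuallyEq_nhds_iff_eventuallyEq_nhdsNE hg).1 <| by
    filter_upwards [mem_nhdsWithin_of_mem_nhds disc_mem_nhds_zero, self_mem_nhdsWithin]
      using hne
  intro z hz
  obtain rfl | hz0 := eq_or_ne z 0
  exacts [hzero.eq_of_nhds, hne z hz hz0]

section BoundaryValues

open AddCircle MeasureTheory

/-- The isometric embedding of `H²(𝔻)` into `L²` of the unit circle that sends a function to its
boundary values: the Taylor coefficients become Fourier coefficients. The circle is encoded as
`ℝ / ℤ` with normalized Haar measure. -/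
def boundaryValue : H2 →ₗᵢ[ℂ] Lp ℂ 2 (haarAddCircle (T := 1)) :=
  ((orthonormal_fourier (T := 1)).comp ((↑) : ℕ → ℤ)
    Nat.cast_injective).orthogonalFamily.linearIsometry

lemma boundaryValue_ae_eq {f : H2} (hf : Memℓp f 1) :
    boundaryValue f =ᵐ[haarAddCircle] fun t => ev f (toCircle t) := by
  have hsum : Summable fun n : ℕ => f n • (fourier n : C(AddCircle (1 : ℝ), ℂ)) := by
    have := (memℓp_gen_iff (by simp)).1 hf
    exact .of_norm <| by simpa [norm_smul, fourier_norm] using this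
  have hLp : boundaryValue f = ContinuousMap.toLp 2 haarAddCircle ℂ
      (∑' n : ℕ, f n • (fourier n : C(AddCircle (1 : ℝ), ℂ))) := by
    rw [ContinuousLinearMap.map_tsum _ hsum]
    simp [boundaryValue, OrthogonalFamily.linearIsometry_apply, fourierLp]
  rw [hLp]
  filter_upwards [ContinuousMap.coeFn_toLp (p := 2) (𝕜 := ℂ) haarAddCircle
    (∑' n : ℕ, f n • (fourier n : C(AddCircle (1 : ℝ), ℂ)))] with t ht
  rw [ht, ← ContinuousMap.tsum_apply hsum]
  simp [ev, fourier_apply, toCircle_nsmul]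

lemma norm_le_of_norm_ev_le_on_circle {f g : H2} (hf : Memℓp f 1) (hg : Memℓp g 1)
    (h : ∀ w : ℂ, ‖w‖ = 1 → ‖ev f w‖ ≤ ‖ev g w‖) : ‖f‖ ≤ ‖g‖ := by
  rw [← boundaryValue.norm_map f, ← boundaryValue.norm_map g]
  apply Lp.norm_le_norm_of_ae_le
  filter_upwards [boundaryValue_ae_eq hf, boundaryValue_ae_eq hg] with t hft hgt
  rw [hft, hgt]
  exact h _ (Circle.norm_coe _)

end BoundaryValues

section Domination

lemma memℓp_one_of_summable {a : ℕ → ℂ} (ha : Summable a) : Memℓp a 1 :=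
  memℓp_gen <| by simpa using ha.norm

/-- The dilation `z ↦ F(rz)` of the power series `F(z) = ∑ aₙ zⁿ`, as an element of `H²(𝔻)`. -/
def dilation (a : ℕ → ℂ) (r : ℂ) (ha : Summable fun n => a n * r ^ n) : H2 :=
  ⟨fun n => a n * r ^ n, (memℓp_one_of_summable ha).of_exponent_ge one_le_two⟩

lemma ev_dilation {a : ℕ → ℂ} {r : ℂ} (ha : Summable fun n => a n * r ^ n) (w : ℂ) :
    ev (dilation a r ha) w = ∑' n, a n * (r * w) ^ n :=
  tsum_congr fun n => by rw [mul_pow, ← mul_assoc]; rfl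

lemma norm_dilation_le (f : H2) {r : ℂ} (hr : r ∈ Disc) :
    ‖dilation f r (H2.summable_coeff_mul_pow f hr)‖ ≤ ‖f‖ := by
  have hr' : ‖r‖ ≤ 1 := (mem_ball_zero_iff.1 hr).le
  refine lp.norm_mono two_ne_zero fun n => ?_
  calc ‖f n * r ^ n‖ = ‖f n‖ * ‖r‖ ^ n := by rw [norm_mul, norm_pow]
    _ ≤ ‖f n‖ := mul_le_of_le_one_right (norm_nonneg _) (pow_le_one₀ (norm_nonneg r) hr')

lemma exists_ev_eq_of_norm_le {F : ℂ → ℂ} (hF : DifferentiableOn ℂ F Disc) (f : H2)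
    (hle : ∀ z ∈ Disc, ‖F z‖ ≤ ‖ev f z‖) :
    ∃ g : H2, (∀ z ∈ Disc, ev g z = F z) ∧ ‖g‖ ≤ ‖f‖ := by
  obtain ⟨a, ha⟩ : ∃ a : ℕ → ℂ, ∀ z ∈ Disc, HasSum (fun n => a n * z ^ n) (F z) :=
    ⟨fun n => (n.factorial : ℂ)⁻¹ * iteratedDeriv n F 0, fun z hz => by
      simpa [mul_assoc, mul_comm (z ^ _)] using Complex.hasSum_taylorSeries_on_ball hF hz⟩
  let r (k : ℕ) : ℂ := k / (k + 1)
  have hr (k : ℕ) : r k ∈ Disc := by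
    have hnorm : ‖(k : ℂ) + 1‖ = k + 1 := mod_cast Complex.norm_natCast (k + 1)
    rw [Disc, mem_ball_zero_iff, norm_div, Complex.norm_natCast, hnorm, div_lt_one (by positivity)]
    exact lt_add_one _
  let G (k : ℕ) : H2 := dilation a (r k) (ha _ (hr k)).summable
  have hG (k : ℕ) : ‖G k‖ ≤ ‖f‖ := by
    refine (norm_le_of_norm_ev_le_on_circle ?_ ?_ fun w hw => ?_).trans (norm_dilation_le f (hr k))
    · exact memℓp_one_of_summable (ha _ (hr k)).summable
    · exact memℓp_one_of_summable (H2.summable_coeff_mul_pow f (hr k))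
    · have hrw : r k * w ∈ Disc := by simpa [Disc, hw] using hr k
      rw [ev_dilation, ev_dilation, (ha _ hrw).tsum_eq]
      exact hle _ hrw
  have hlim : Tendsto (fun k n => G k n) atTop (nhds a) := by
    refine tendsto_pi_nhds.2 fun n => ?_
    simpa [G, dilation, r] using ((tendsto_natCast_div_add_atTop (1 : ℂ)).pow n).const_mul (a n)
  have hmem : Memℓp a 2 := lp.memℓp_of_tendsto
    (isBounded_iff_forall_norm_le.2 ⟨‖f‖, Set.forall_mem_range.2 hG⟩) hlim
  exact ⟨⟨a, hmem⟩, fun z hz => (ha z hz).tsum_eq,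
    lp.norm_le_of_tendsto (.of_forall hG) hlim⟩

lemma norm_le_of_norm_ev_le {f g : H2} (hle : ∀ z ∈ Disc, ‖ev f z‖ ≤ ‖ev g z‖) : ‖f‖ ≤ ‖g‖ := by
  obtain ⟨f', hf', hnorm⟩ := exists_ev_eq_of_norm_le (H2.differentiableOn_ev f) g hle
  obtain rfl : f' = f := H2.eq_of_ev_eventuallyEq <| by
    filter_upwards [disc_mem_nhds_zero] using hf'
  exact hnorm

lemma exists_ev_eq_mul {θ : ℂ → ℂ} (hθ : DifferentiableOn ℂ θ Disc) (hle : ∀ z ∈ Disc, ‖θ z‖ ≤ 1)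
    (f : H2) : ∃ h : H2, ∀ z ∈ Disc, ev h z = θ z * ev f z := by
  have hmul : ∀ z ∈ Disc, ‖θ z * ev f z‖ ≤ ‖ev f z‖ := fun z hz => by
    rw [norm_mul]
    exact mul_le_of_le_one_left (norm_nonneg _) (hle z hz)
  obtain ⟨h, hev, -⟩ := exists_ev_eq_of_norm_le (hθ.mul (H2.differentiableOn_ev f)) f hmul
  exact ⟨h, hev⟩

end Domination

section Dirichlet

lemma norm_div_sqrt_succ_le (a : ℂ) (n : ℕ) : ‖a / (√((n : ℝ) + 1) : ℂ)‖ ≤ ‖a‖ := by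
  rw [norm_div, Complex.norm_of_nonneg (Real.sqrt_nonneg _)]
  exact div_le_self (norm_nonneg a) (Real.one_le_sqrt.2 (by simp))

/-- Division of the `n`-th Taylor coefficient by `√(n + 1)`. It carries `H²(𝔻)` isometrically onto
the Dirichlet space, which is how completeness is transferred to the latter. -/
def dirichletEmb : H2 →ₗ[ℂ] H2 where
  toFun g := ⟨fun n => g n / (√((n : ℝ) + 1) : ℂ),
    (lp.memℓp g).mono' fun n => norm_div_sqrt_succ_le (g n) n⟩
  map_add' f g := by ext n; exact add_div _ _ _
  map_smul' c g := by ext n; exact mul_div_assoc _ _ _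

lemma dirichletEmb_apply (g : H2) (n : ℕ) : dirichletEmb g n = g n / (√((n : ℝ) + 1) : ℂ) :=
  rfl

lemma norm_dirichletEmb_le (g : H2) : ‖dirichletEmb g‖ ≤ ‖g‖ :=
  lp.norm_mono two_ne_zero fun n => norm_div_sqrt_succ_le (g n) n

lemma norm_sq_dirichletEmb_mul (g : H2) (n : ℕ) :
    ‖dirichletEmb g n‖ ^ 2 * ((n : ℝ) + 1) = ‖g n‖ ^ 2 := by
  have hn : (0 : ℝ) < n + 1 := by positivity
  rw [dirichletEmb_apply, norm_div, Complex.norm_of_nonneg (Real.sqrt_nonneg _), div_pow,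
    Real.sq_sqrt hn.le, div_mul_cancel₀ _ hn.ne']

lemma dirMem_dirichletEmb (g : H2) : DirMem (dirichletEmb g) := by
  simp only [DirMem, norm_sq_dirichletEmb_mul]
  simpa using (memℓp_gen_iff (by simp)).1 (lp.memℓp g)

lemma DNorm_dirichletEmb (g : H2) : DNorm (dirichletEmb g) = ‖g‖ := by
  simp only [DNorm, norm_sq_dirichletEmb_mul]
  rw [← Real.sqrt_sq (norm_nonneg g)]
  congr 1
  simpa using (lp.norm_rpow_eq_tsum (p := 2) (by simp) g).symm

lemma DirMem.exists_dirichletEmb_eq {f : H2} (hf : DirMem f) : ∃ g, dirichletEmb g = f := by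
  let b (n : ℕ) : ℂ := f n * (√((n : ℝ) + 1) : ℂ)
  have hsq (n : ℕ) : ‖b n‖ ^ 2 = ‖f n‖ ^ 2 * ((n : ℝ) + 1) := by
    rw [norm_mul, mul_pow, Complex.norm_of_nonneg (Real.sqrt_nonneg _),
      Real.sq_sqrt (by positivity)]
  have hb : Memℓp b 2 := memℓp_gen <| by
    simpa only [ENNReal.toReal_ofNat, Real.rpow_ofNat, hsq] using (show Summable _ from hf)
  refine ⟨⟨b, hb⟩, ?_⟩
  ext n
  have hn : (√((n : ℝ) + 1) : ℂ) ≠ 0 := Complex.ofReal_ne_zero.2 (by positivity)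
  exact mul_div_cancel_right₀ (f n) hn

lemma DirMem.norm_le_DNorm {f : H2} (hf : DirMem f) : ‖f‖ ≤ DNorm f := by
  obtain ⟨g, rfl⟩ := hf.exists_dirichletEmb_eq
  exact (norm_dirichletEmb_le g).trans_eq (DNorm_dirichletEmb g).symm

lemma exists_tendsto_DNorm_sub_of_cauchy (F : ℕ → H2) (hF : ∀ n, DirMem (F n))
    (hcauchy : ∀ ε > (0 : ℝ), ∃ N : ℕ, ∀ m ≥ N, ∀ n ≥ N, DNorm (F m - F n) < ε) :
    ∃ f : H2, DirMem f ∧ Tendsto (fun n => DNorm (F n - f)) atTop (nhds 0) := by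
  choose G hG using fun n => (hF n).exists_dirichletEmb_eq
  obtain rfl : (fun n => dirichletEmb (G n)) = F := funext hG
  simp only [← map_sub, DNorm_dirichletEmb, ← dist_eq_norm] at hcauchy
  obtain ⟨g, hg⟩ := cauchySeq_tendsto_of_complete (Metric.cauchySeq_iff.2 hcauchy)
  refine ⟨dirichletEmb g, dirMem_dirichletEmb g, ?_⟩
  simpa only [← map_sub, DNorm_dirichletEmb] using tendsto_iff_norm_sub_tendsto_zero.1 hg

lemma norm_sq_bsh_mul_le (f : H2) (n : ℕ) :
    ‖bsh f n‖ ^ 2 * ((n : ℝ) + 1) ≤ ‖f (n + 1)‖ ^ 2 * (((n + 1 : ℕ) : ℝ) + 1) := by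
  simp only [bsh]
  gcongr
  simp

lemma DirMem.backwardShift {f : H2} (hf : DirMem f) : DirMem (bsh f) :=
  .of_nonneg_of_le (fun n => by positivity) (norm_sq_bsh_mul_le f) ((summable_nat_add_iff 1).2 hf)

lemma DirMem.DNorm_bsh_le {f : H2} (hf : DirMem f) : DNorm (bsh f) ≤ DNorm f := by
  apply Real.sqrt_le_sqrt
  rw [hf.tsum_eq_zero_add]
  exact (hf.backwardShift.tsum_le_tsum (norm_sq_bsh_mul_le f) ((summable_nat_add_iff 1).2 hf)).trans
    (le_add_of_nonneg_left (by positivity))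

lemma dirMem_monomial (n : ℕ) (c : ℂ) : DirMem (H2.monomial n c) :=
  summable_of_ne_finset_zero (s := {n}) fun m hm => by
    simp [H2.monomial_apply_of_ne (Finset.notMem_singleton.1 hm)]

lemma DInner_monomial_right (f : H2) (n : ℕ) (c : ℂ) :
    DInner f (H2.monomial n c) = ((n : ℂ) + 1) * (starRingEnd ℂ) (f n) * c := by
  rw [DInner, tsum_eq_single n fun m hm => by simp [H2.monomial_apply_of_ne hm],
    H2.monomial_apply_self]

lemma DInner_monomial_left (f : H2) (n : ℕ) (c : ℂ) :
    DInner (H2.monomial n c) f = ((n : ℂ) + 1) * (starRingEnd ℂ) c * f n := by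
  rw [DInner, tsum_eq_single n fun m hm => by simp [H2.monomial_apply_of_ne hm],
    H2.monomial_apply_self]

end Dirichlet

section ThetaD

variable {θ : ℂ → ℂ} {h f f' : H2}

lemma ThetaRel.eq_of_thetaRel (hθ : ContinuousAt θ 0) (hne : θ 0 ≠ 0) (hf : ThetaRel θ h f)
    (hf' : ThetaRel θ h f') : f = f' := by
  apply H2.eq_of_ev_eventuallyEq
  filter_upwards [disc_mem_nhds_zero, hθ.eventually_ne hne] with z hz hθz
  exact mul_left_cancel₀ hθz <| (hf.2 z hz).symm.trans (hf'.2 z hz)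

lemma ThetaRel.norm_le_DNorm (hle : ∀ z ∈ Disc, ‖θ z‖ ≤ 1) (hf : ThetaRel θ h f) :
    ‖h‖ ≤ DNorm f :=
  (norm_le_of_norm_ev_le fun z hz => by
    rw [hf.2 z hz, norm_mul]
    exact mul_le_of_le_one_left (norm_nonneg _) (hle z hz)).trans hf.1.norm_le_DNorm

lemma ThetaRel.apply_zero (hf : ThetaRel θ h f) : h 0 = θ 0 * f 0 := by
  simpa only [H2.ev_zero] using hf.2 0 zero_mem_disc

lemma ThetaRel.apply_zero_eq_zero (hne : θ 0 ≠ 0) (hf : ThetaRel θ h f) (h0 : h 0 = 0) :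
    f 0 = 0 :=
  (mul_eq_zero_iff_left hne).1 (hf.apply_zero.symm.trans h0)

lemma ThetaRel.backwardShift (hθ : ContinuousAt θ 0) (hne : θ 0 ≠ 0) (hf : ThetaRel θ h f)
    (h0 : h 0 = 0) : ThetaRel θ (bsh h) (bsh f) := by
  have hcont (g : H2) : ContinuousAt (ev g) 0 :=
    (H2.hasFPowerSeriesOnBall_ev g).analyticAt.continuousAt
  refine ⟨hf.1.backwardShift, eqOn_disc_of_eqOn_id_mul (hcont _) (hθ.mul (hcont _)) fun z hz => ?_⟩
  calc z * ev (bsh h) z = θ z * ev f z := by rw [← H2.ev_eq_mul_ev_bsh h0 hz, hf.2 z hz]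
    _ = z * (θ z * ev (bsh f) z) := by
      rw [H2.ev_eq_mul_ev_bsh (hf.apply_zero_eq_zero hne h0) hz, mul_left_comm]

lemma thetaRel_monomial_zero_iff {c : ℂ} :
    ThetaRel θ h (H2.monomial 0 c) ↔ ∀ z ∈ Disc, ev h z = c * θ z := by
  simp only [ThetaRel, dirMem_monomial, true_and, H2.ev_monomial, pow_zero, mul_one, mul_comm]

lemma eq_monomial_zero_of_orthogonal (hθ : DifferentiableOn ℂ θ Disc)
    (hle : ∀ z ∈ Disc, ‖θ z‖ ≤ 1)
    (horth : ∀ h' f' : H2, ThetaRel θ h' f' → h' 0 = 0 → DInner f f' = 0) :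
    f = H2.monomial 0 (f 0) := by
  ext n
  obtain rfl | hn := eq_or_ne n 0
  · rw [H2.monomial_apply_self]
  obtain ⟨h', hev⟩ := exists_ev_eq_mul hθ hle (H2.monomial n 1)
  have hrel : ThetaRel θ h' (H2.monomial n 1) := ⟨dirMem_monomial n 1, hev⟩
  have hinner := horth h' _ hrel <| by
    rw [hrel.apply_zero, H2.monomial_apply_of_ne hn.symm, mul_zero]
  rw [DInner_monomial_right] at hinner
  simpa [H2.monomial_apply_of_ne hn, Nat.cast_add_one_ne_zero] using hinner

lemma orthogonal_vanishing_eq_span (hθ : DifferentiableOn ℂ θ Disc) (hle : ∀ z ∈ Disc, ‖θ z‖ ≤ 1)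
    (hne : θ 0 ≠ 0) :
    {h : H2 | ∃ f, ThetaRel θ h f ∧
        ∀ h' f' : H2, ThetaRel θ h' f' → h' 0 = 0 → DInner f f' = 0}
      = {h : H2 | ∃ c : ℂ, ∀ z ∈ Disc, ev h z = c * θ z} := by
  ext h
  simp only [Set.mem_ofPred_eq, ← thetaRel_monomial_zero_iff]
  constructor
  · rintro ⟨f, hf, horth⟩
    exact ⟨f 0, eq_monomial_zero_of_orthogonal hθ hle horth ▸ hf⟩
  · rintro ⟨c, hc⟩
    refine ⟨_, hc, fun h' f' hf' h0 => ?_⟩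
    rw [DInner_monomial_left, hf'.apply_zero_eq_zero hne h0, mul_zero]

theorem stmt12_general (θ : ℂ → ℂ) (hθa : DifferentiableOn ℂ θ Disc)
    (hle : ∀ z ∈ Disc, ‖θ z‖ ≤ 1) (hne : θ 0 ≠ 0) :
    (∀ h f f' : H2, ThetaRel θ h f → ThetaRel θ h f' → f = f') ∧
    (∀ F : ℕ → H2, (∀ n, DirMem (F n)) →
      (∀ ε > (0 : ℝ), ∃ N : ℕ, ∀ m ≥ N, ∀ n ≥ N, DNorm (F m - F n) < ε) →
      ∃ f : H2, DirMem f ∧ Tendsto (fun n => DNorm (F n - f)) atTop (nhds 0)) ∧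
    (∀ h f : H2, ThetaRel θ h f → ‖h‖ ≤ DNorm f) ∧
    (∀ h : H2, (∃ f, ThetaRel θ h f) → h 0 = 0 → ∃ f', ThetaRel θ (bsh h) f') ∧
    (∀ g f : H2, ThetaRel θ (fsh g) f → ∃ f', ThetaRel θ g f' ∧ DNorm f' ≤ DNorm f) ∧
    {h : H2 | ∃ f, ThetaRel θ h f ∧
        ∀ h' f' : H2, ThetaRel θ h' f' → h' 0 = 0 → DInner f f' = 0}
      = {h : H2 | ∃ c : ℂ, ∀ z ∈ Disc, ev h z = c * θ z} := by
  have hcont : ContinuousAt θ 0 := (hθa.differentiableAt disc_mem_nhds_zero).continuousAt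
  refine ⟨fun _ _ _ hf hf' => hf.eq_of_thetaRel hcont hne hf', exists_tendsto_DNorm_sub_of_cauchy,
    fun _ _ hf => hf.norm_le_DNorm hle, ?_, ?_, orthogonal_vanishing_eq_span hθa hle hne⟩
  · rintro h ⟨f, hf⟩ h0
    exact ⟨bsh f, hf.backwardShift hcont hne h0⟩
  · intro g f hf
    exact ⟨bsh f, hf.backwardShift hcont hne rfl, hf.1.DNorm_bsh_le⟩

end ThetaD

/- STATEMENT 12: Let 𝒟 be the Dirichlet space and let θ be a bounded analytic function on 𝔻
with ‖θ‖_∞ = 1 and θ(0) > 0.  Set M = θ𝒟 with ‖θf‖_M := ‖f‖_𝒟.  Then M is a well-defined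
Hilbert space contractively contained in H²(𝔻) (the representative f of θf is unique, 𝒟 —
and hence M — is complete, and ‖θf‖₂ ≤ ‖θf‖_M), M is nearly S*-invariant,
‖zg‖_M ≥ ‖g‖_M whenever zg ∈ M, and M ⊖ (M ∩ zH²(𝔻)) = span{θ}. -/
theorem stmt12
    (θ : ℂ → ℂ) (hθa : DifferentiableOn ℂ θ Disc)
    (hθb : ∃ C : ℝ, ∀ z ∈ Disc, ‖θ z‖ ≤ C)
    (hθ1 : sSup ((fun z => ‖θ z‖) '' Disc) = 1)
    (hθ0 : (θ 0).im = 0 ∧ 0 < (θ 0).re) :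
    -- the norm on M = θ𝒟 is well defined (representatives are unique):
    (∀ h f f' : H2, ThetaRel θ h f → ThetaRel θ h f' → f = f') ∧
    -- M is a Hilbert space: 𝒟 (≅ M isometrically) is complete
    -- (its norm comes from the inner product DInner by construction):
    (∀ F : ℕ → H2, (∀ n, DirMem (F n)) →
      (∀ ε > (0 : ℝ), ∃ N : ℕ, ∀ m ≥ N, ∀ n ≥ N, DNorm (F m - F n) < ε) →
      ∃ f : H2, DirMem f ∧ Tendsto (fun n => DNorm (F n - f)) atTop (nhds 0)) ∧
    -- M is contractively contained in H²(𝔻):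
    (∀ h f : H2, ThetaRel θ h f → ‖h‖ ≤ DNorm f) ∧
    -- M is nearly invariant under the backward shift:
    (∀ h : H2, (∃ f, ThetaRel θ h f) → h 0 = 0 → ∃ f', ThetaRel θ (bsh h) f') ∧
    -- ‖zg‖_M ≥ ‖g‖_M whenever zg ∈ M:
    (∀ g f : H2, ThetaRel θ (fsh g) f → ∃ f', ThetaRel θ g f' ∧ DNorm f' ≤ DNorm f) ∧
    -- M ⊖ (M ∩ zH²(𝔻)) = span{θ}:
    {h : H2 | ∃ f, ThetaRel θ h f ∧
        ∀ h' f' : H2, ThetaRel θ h' f' → h' 0 = 0 → DInner f f' = 0}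
      = {h : H2 | ∃ c : ℂ, ∀ z ∈ Disc, ev h z = c * θ z} := by
  refine stmt12_general θ hθa (fun z hz => ?_) fun h => by simp [h] at hθ0
  exact hθ1 ▸ le_csSup (by simpa [BddAbove, upperBounds, Set.Nonempty] using hθb) ⟨z, hz, rfl⟩
end
end
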